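/- Let A be a partial H-module algebra. If 𝒫 is a prime (respectively semiprime) ideal of A, then (𝒫:H) = {x ∈ 𝒫 : H·x ⊆ 𝒫} is an H-prime (respectively H-semiprime) ideal of A. -/

import Mathlib

open TensorProduct

noncomputable section

variable (k : Type*) [Field k]

/-- The "Sweedler sum" `h ↦ Σ f(h₁) * g(h₂)`. -/
def sweedler {H A : Type*} [Ring H] [HopfAlgebra k H]
    [Ring A] [Algebra k A] (f g : H →ₗ[k] A) : H →ₗ[k] A :=
  (LinearMap.mul' k A) ∘ₗ (TensorProduct.map f g) ∘ₗ Coalgebra.comul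

/-- A (left) partial `H`-module algebra structure on a unital algebra `A`:
`1_H · a = a`, `h · (ab) = Σ (h₁·a)(h₂·b)` and `h·(g·b) = Σ (h₁·1)((h₂ g)·b)`. -/
structure PartialModuleAlgebra (H A : Type*) [Ring H] [HopfAlgebra k H]
    [Ring A] [Algebra k A] where
  act : H →ₗ[k] A →ₗ[k] A
  one_act : ∀ a : A, act 1 a = a
  act_mul : ∀ (h : H) (a b : A),
    act h (a * b) = sweedler k (act.flip a) (act.flip b) h
  act_act : ∀ (h g : H) (b : A),
    act h (act g b) =
      sweedler k (act.flip 1) ((act.flip b) ∘ₗ LinearMap.mulRight k g) h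

variable {H A : Type*} [Ring H] [HopfAlgebra k H] [Ring A] [Algebra k A]

/-- A (two-sided) ideal of `A`, encoded as a `k`-submodule closed under multiplication
by elements of `A` on both sides. -/
def IsIdeal (I : Submodule k A) : Prop :=
  ∀ a ∈ I, ∀ b : A, a * b ∈ I ∧ b * a ∈ I

/-- An `H`-stable subspace: `H · I ⊆ I`. -/
def Hstable (ξ : PartialModuleAlgebra k H A) (I : Submodule k A) : Prop :=
  ∀ (h : H), ∀ x ∈ I, ξ.act h x ∈ I

/-- `(I : H) = {x ∈ I | h · x ∈ I for all h ∈ H}`. -/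
def colonH (ξ : PartialModuleAlgebra k H A) (I : Submodule k A) : Submodule k A :=
  I ⊓ ⨅ h : H, Submodule.comap (ξ.act h) I

/-- The product of two ideals of `A`. -/
def idealProd (I J : Submodule k A) : Submodule k A :=
  Submodule.span k {z | ∃ a ∈ I, ∃ b ∈ J, z = a * b}

/-- An `H`-prime ideal: a proper `H`-stable ideal `𝔭` such that for all `H`-stable ideals
`I, J`, `IJ ⊆ 𝔭` implies `I ⊆ 𝔭` or `J ⊆ 𝔭`. -/
def IsHPrime (ξ : PartialModuleAlgebra k H A) (p : Submodule k A) : Prop :=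
  IsIdeal k p ∧ Hstable k ξ p ∧ p ≠ ⊤ ∧
    ∀ I J : Submodule k A, IsIdeal k I → Hstable k ξ I → IsIdeal k J → Hstable k ξ J →
      idealProd k I J ≤ p → I ≤ p ∨ J ≤ p

/-- An `H`-semiprime ideal: a proper `H`-stable ideal `𝔰` such that `I² ⊆ 𝔰` implies
`I ⊆ 𝔰` for every `H`-stable ideal `I`. -/
def IsHSemiprime (ξ : PartialModuleAlgebra k H A) (s : Submodule k A) : Prop :=
  IsIdeal k s ∧ Hstable k ξ s ∧ s ≠ ⊤ ∧
    ∀ I : Submodule k A, IsIdeal k I → Hstable k ξ I → idealProd k I I ≤ s → I ≤ s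

/-- The subspace `A(H·x)A(H·y)`, spanned by the products `a (h·x) b (g·y)`. -/
def spanAxAy (ξ : PartialModuleAlgebra k H A) (x y : A) : Submodule k A :=
  Submodule.span k {w | ∃ (a : A) (h : H) (b : A) (g : H), w = a * ξ.act h x * b * ξ.act g y}

/-- An `Hm`-system: a nonempty `M ⊆ A` such that `A(H·x)A(H·y) ∩ M ≠ ∅` for `x, y ∈ M`. -/
def HmSystem (ξ : PartialModuleAlgebra k H A) (M : Set A) : Prop :=
  M.Nonempty ∧ ∀ x ∈ M, ∀ y ∈ M, ∃ z ∈ M, z ∈ spanAxAy k ξ x y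

/-- An `Hn`-system: a nonempty `N ⊆ A` such that `A(H·x)A(H·x) ∩ N ≠ ∅` for `x ∈ N`. -/
def HnSystem (ξ : PartialModuleAlgebra k H A) (N : Set A) : Prop :=
  N.Nonempty ∧ ∀ x ∈ N, ∃ z ∈ N, z ∈ spanAxAy k ξ x x

/-- The `H`-radical `√_H(I)` of an `H`-stable ideal `I`:
`{x | every Hm-system containing x meets I}`. -/
def Hradical (ξ : PartialModuleAlgebra k H A) (I : Submodule k A) : Set A :=
  {x : A | ∀ M : Set A, HmSystem k ξ M → x ∈ M → (M ∩ (I : Set A)).Nonempty}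

/-- A prime ideal of `A` (in the two-sided, ideal-theoretic sense). -/
def IsPrimeIdeal (P : Submodule k A) : Prop :=
  IsIdeal k P ∧ P ≠ ⊤ ∧
    ∀ I J : Submodule k A, IsIdeal k I → IsIdeal k J → idealProd k I J ≤ P → I ≤ P ∨ J ≤ P

/-- A semiprime ideal of `A`. -/
def IsSemiprimeIdeal (P : Submodule k A) : Prop :=
  IsIdeal k P ∧ P ≠ ⊤ ∧
    ∀ I : Submodule k A, IsIdeal k I → idealProd k I I ≤ P → I ≤ P

theorem sweedler_mem_aux (P : Submodule k A) (f g : H →ₗ[k] A)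
    (hfg : ∀ a b, f a * g b ∈ P) (h : H) : sweedler k f g h ∈ P := by
  have key : ∀ t : H ⊗[k] H, LinearMap.mul' k A (TensorProduct.map f g t) ∈ P := by
    intro t
    induction t using TensorProduct.induction_on with
    | zero => simp
    | tmul a b => simpa using hfg a b
    | add x y hx hy => simpa using P.add_mem hx hy
  exact key _

theorem mem_colonH_aux (ξ : PartialModuleAlgebra k H A) (P : Submodule k A) (x : A) :
    x ∈ colonH k ξ P ↔ ∀ h, ξ.act h x ∈ P := by
  simp only [colonH, Submodule.mem_inf, Submodule.mem_iInf, Submodule.mem_comap]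
  refine ⟨fun h => h.2, fun h => ⟨?_, h⟩⟩
  simpa [ξ.one_act] using h 1

theorem colonH_le_aux (ξ : PartialModuleAlgebra k H A) (P : Submodule k A) :
    colonH k ξ P ≤ P := inf_le_left

theorem colonH_isIdeal_aux (ξ : PartialModuleAlgebra k H A) (P : Submodule k A)
    (hP : IsIdeal k P) : IsIdeal k (colonH k ξ P) := by
  intro a ha b
  rw [mem_colonH_aux] at ha
  rw [mem_colonH_aux, mem_colonH_aux]
  refine ⟨fun h => ?_, fun h => ?_⟩
  · rw [ξ.act_mul]
    exact sweedler_mem_aux k P _ _ (fun c d => (hP _ (ha c) _).1) h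
  · rw [ξ.act_mul]
    exact sweedler_mem_aux k P _ _ (fun c d => (hP _ (ha d) _).2) h

theorem colonH_stable_aux (ξ : PartialModuleAlgebra k H A) (P : Submodule k A)
    (hP : IsIdeal k P) : Hstable k ξ (colonH k ξ P) := by
  intro g x hx
  rw [mem_colonH_aux] at hx ⊢
  intro h
  rw [ξ.act_act]
  exact sweedler_mem_aux k P _ _ (fun c d => (hP _ (hx (d * g)) _).2) h

theorem le_colonH_aux (ξ : PartialModuleAlgebra k H A) (P I : Submodule k A)
    (hI : Hstable k ξ I) (h : I ≤ P) : I ≤ colonH k ξ P := fun x hx =>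
  (mem_colonH_aux k ξ P x).2 fun g => h (hI g x hx)

theorem colonH_ne_top_aux (ξ : PartialModuleAlgebra k H A) (P : Submodule k A)
    (hP : P ≠ ⊤) : colonH k ξ P ≠ ⊤ := fun h =>
  hP (top_le_iff.1 (h ▸ colonH_le_aux k ξ P))

/-- If `𝒫` is a prime (resp. semiprime) ideal of `A`, then `(𝒫 : H)` is `H`-prime
(resp. `H`-semiprime). -/
theorem colonH_prime_semiprime (ξ : PartialModuleAlgebra k H A) (P : Submodule k A) :
    (IsPrimeIdeal k P → IsHPrime k ξ (colonH k ξ P)) ∧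
    (IsSemiprimeIdeal k P → IsHSemiprime k ξ (colonH k ξ P)) := by
  constructor
  · rintro ⟨h1, h2, h3⟩
    refine ⟨colonH_isIdeal_aux k ξ P h1, colonH_stable_aux k ξ P h1,
      colonH_ne_top_aux k ξ P h2, fun I J hI hI' hJ hJ' hIJ => ?_⟩
    exact (h3 I J hI hJ (hIJ.trans (colonH_le_aux k ξ P))).imp
      (le_colonH_aux k ξ P I hI') (le_colonH_aux k ξ P J hJ')
  · rintro ⟨h1, h2, h3⟩
    refine ⟨colonH_isIdeal_aux k ξ P h1, colonH_stable_aux k ξ P h1,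
      colonH_ne_top_aux k ξ P h2, fun I hI hI' hII => ?_⟩
    exact le_colonH_aux k ξ P I hI' (h3 I hI (hII.trans (colonH_le_aux k ξ P)))
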